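/- The infinite series identity 9π²/4 = Σ_{k=0}^{∞} (1/64)^k · [(1/2)_k (1)_k (1)_k (1)_k] / [(5/4)_k (5/4)_k (7/4)_k (7/4)_k] · (42k² + 61k + 22) holds, where the sum is over natural numbers k and all quantities are real numbers. -/

import Mathlib

noncomputable def risingFactorial (a : ℝ) (k : ℕ) : ℝ := ∏ i ∈ Finset.range k, (a + i)

/-!
For every `x > 0` the series `∑ j, 1 / (x + j) ^ 2` is the row `n = 0` of a Wilf–Zeilberger pair
`F n (x + j)`, `G n (x + j)`. Summing the WZ relation over `j` shows that `G n x` is the difference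
of the `n`-th and `(n + 1)`-st row sums of `F`. These row sums decay like `8⁻ⁿ`, so `∑ n, G n x`
telescopes to `∑ j, 1 / (x + j) ^ 2`. At `x = 1 / 2` the latter is `π ^ 2 / 2`, and the duplication
formula for rising factorials turns `9 / 2 * G n (1 / 2)` into the required summand.
-/

open Filter Finset Topology

section RisingFactorial

theorem risingFactorial_zero (a : ℝ) : risingFactorial a 0 = 1 := prod_range_zero _

theorem risingFactorial_succ (a : ℝ) (k : ℕ) :
    risingFactorial a (k + 1) = risingFactorial a k * (a + k) :=
  prod_range_succ _ _

theorem risingFactorial_pos {a : ℝ} (ha : 0 < a) (k : ℕ) : 0 < risingFactorial a k :=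
  prod_pos fun _ _ => by positivity

theorem risingFactorial_succ_left (a : ℝ) (k : ℕ) :
    risingFactorial a (k + 1) = a * risingFactorial (a + 1) k := by
  simp only [risingFactorial, prod_range_succ', Nat.cast_zero, add_zero, Nat.cast_add, Nat.cast_one,
    add_assoc, add_comm (1 : ℝ), mul_comm a]

theorem risingFactorial_add_one {a : ℝ} (ha : a ≠ 0) (k : ℕ) :
    risingFactorial (a + 1) k = risingFactorial a k * (a + k) / a := by
  rw [eq_div_iff ha, ← risingFactorial_succ, risingFactorial_succ_left, mul_comm]

theorem risingFactorial_two_mul (a : ℝ) (k : ℕ) :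
    risingFactorial a (2 * k) =
      4 ^ k * risingFactorial (a / 2) k * risingFactorial ((a + 1) / 2) k := by
  induction k with
  | zero => simp only [mul_zero, risingFactorial_zero, pow_zero, mul_one]
  | succ k ih =>
    simp only [Nat.mul_succ, risingFactorial_succ, ih]
    push_cast
    ring

end RisingFactorial

section WilfZeilberger

/-- A Wilf–Zeilberger pair: the forward difference of `F` in its first index equals the forward
difference of `G` in its second index. -/
def IsWZPair {E : Type*} [AddCommGroup E] (F G : ℕ → ℕ → E) : Prop :=
  ∀ n j, F (n + 1) j - F n j = G n (j + 1) - G n j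

namespace IsWZPair

variable {E : Type*} [AddCommGroup E] [TopologicalSpace E] [IsTopologicalAddGroup E] [T2Space E]
  {F G : ℕ → ℕ → E} {S : ℕ → E}

theorem apply_zero_eq_sub (h : IsWZPair F G) (hF : ∀ n, HasSum (F n) (S n))
    (hG : ∀ n, Tendsto (G n) atTop (𝓝 0)) (n : ℕ) : G n 0 = S n - S (n + 1) := by
  have hdiff := ((hF (n + 1)).sub (hF n)).tendsto_sum_nat
  simp only [h n _, sum_range_sub] at hdiff
  have hlim : Tendsto (fun J => G n J - G n 0) atTop (𝓝 (0 - G n 0)) := (hG n).sub_const _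
  rw [← neg_sub (S (n + 1)), tendsto_nhds_unique hdiff hlim, zero_sub, neg_neg]

theorem tendsto_sum_range (h : IsWZPair F G) (hF : ∀ n, HasSum (F n) (S n))
    (hG : ∀ n, Tendsto (G n) atTop (𝓝 0)) (hS : Tendsto S atTop (𝓝 0)) :
    Tendsto (fun N => ∑ n ∈ range N, G n 0) atTop (𝓝 (S 0)) := by
  simp only [h.apply_zero_eq_sub hF hG, sum_range_sub']
  simpa only [sub_zero] using hS.const_sub (S 0)

end IsWZPair

end WilfZeilberger

section InverseSquares

variable {x : ℝ}

/-- The first member `F n x` of the WZ pair that accelerates `∑ j, 1 / (x + j) ^ 2`. It equals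
`n! ^ 4 / (2 * n)! * ((x)_n / (x)_{2n+1}) ^ 2`; here `n!` and `(2 * n)!` are written as
`(1)_n` and `4 ^ n * (1 / 2)_n * (1)_n`. -/
noncomputable def wzTerm (n : ℕ) (x : ℝ) : ℝ :=
  risingFactorial 1 n ^ 3 / (4 ^ n * risingFactorial (1 / 2) n) *
    (risingFactorial x n / risingFactorial x (2 * n + 1)) ^ 2

/-- The second member `G n x` of the WZ pair that accelerates `∑ j, 1 / (x + j) ^ 2`: the multiple
of `wzTerm n x` by the rational certificate of the pair. -/
noncomputable def wzMate (n : ℕ) (x : ℝ) : ℝ :=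
  wzTerm n x * (((n + 1) ^ 3 / (x + 2 * n + 1) ^ 2 + (2 * x + 5 * n + 1)) / (2 * (2 * n + 1)))

theorem wzTerm_zero (x : ℝ) : wzTerm 0 x = 1 / x ^ 2 := by
  simp [wzTerm, risingFactorial]

theorem wzTerm_nonneg (n : ℕ) (x : ℝ) : 0 ≤ wzTerm n x := by
  have := risingFactorial_pos one_pos n
  have := risingFactorial_pos one_half_pos n
  unfold wzTerm
  positivity

theorem wzMate_nonneg (hx : 0 < x) (n : ℕ) : 0 ≤ wzMate n x :=
  mul_nonneg (wzTerm_nonneg n x) (by positivity)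

theorem wzTerm_succ (hx : 0 < x) (n : ℕ) :
    wzTerm (n + 1) x = wzTerm n x *
      ((n + 1) ^ 3 / (2 * (2 * n + 1)) * ((x + n) / ((x + 2 * n + 1) * (x + 2 * n + 2))) ^ 2) := by
  have hhalf := (risingFactorial_pos one_half_pos n).ne'
  have hodd := (risingFactorial_pos hx (2 * n)).ne'
  simp only [wzTerm, Nat.mul_succ, risingFactorial_succ]
  push_cast
  rw [show (1 / 2 + n : ℝ) = (2 * n + 1) / 2 by ring]
  field_simp
  ring

theorem wzTerm_add_one (hx : 0 < x) (n : ℕ) :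
    wzTerm n (x + 1) = wzTerm n x * ((x + n) / (x + 2 * n + 1)) ^ 2 := by
  have hodd := (risingFactorial_pos hx (2 * n + 1)).ne'
  simp only [wzTerm, risingFactorial_add_one hx.ne']
  push_cast
  field_simp
  ring

theorem wzTerm_succ_sub (hx : 0 < x) (n : ℕ) :
    wzTerm (n + 1) x - wzTerm n x = wzMate n (x + 1) - wzMate n x := by
  simp only [wzMate, wzTerm_succ hx, wzTerm_add_one hx]
  rw [show x + 1 + 2 * n + 1 = x + 2 * n + 2 by ring]
  field_simp
  ring

theorem isWZPair_wzTerm_wzMate (hx : 0 < x) :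
    IsWZPair (fun n j => wzTerm n (x + j)) (fun n j => wzMate n (x + j)) := fun n j => by
  simpa only [Nat.cast_succ, add_assoc] using wzTerm_succ_sub (x := x + j) (by positivity) n

theorem wzTerm_succ_le (hx : 0 < x) (n : ℕ) : wzTerm (n + 1) x ≤ 1 / 8 * wzTerm n x := by
  have hcube : ((n : ℝ) + 1) ^ 3 / (2 * (2 * n + 1)) ≤ (2 * n + 2) ^ 2 / 8 := by
    rw [div_le_div_iff₀ (by positivity) (by positivity)]
    nlinarith [show 0 ≤ (n : ℝ) * (n + 1) ^ 2 by positivity]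
  have hfrac : (x + n) / ((x + 2 * n + 1) * (x + 2 * n + 2)) ≤ 1 / (2 * n + 2) := by
    rw [div_le_div_iff₀ (by positivity) (by positivity), one_mul]
    exact mul_le_mul (by linarith) (by linarith) (by positivity) (by positivity)
  have hratio : ((n : ℝ) + 1) ^ 3 / (2 * (2 * n + 1)) *
      ((x + n) / ((x + 2 * n + 1) * (x + 2 * n + 2))) ^ 2 ≤ 1 / 8 :=
    calc _ ≤ ((2 * n + 2 : ℝ) ^ 2 / 8) * (1 / (2 * n + 2)) ^ 2 := by gcongr
      _ = 1 / 8 := by field_simp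
  rw [wzTerm_succ hx, mul_comm]
  exact mul_le_mul_of_nonneg_right hratio (wzTerm_nonneg n x)

theorem wzTerm_le (hx : 0 < x) (n : ℕ) : wzTerm n x ≤ (1 / 8) ^ n * (1 / x ^ 2) := by
  induction n with
  | zero => rw [wzTerm_zero, pow_zero, one_mul]
  | succ n ih =>
    calc wzTerm (n + 1) x ≤ 1 / 8 * wzTerm n x := wzTerm_succ_le hx n
      _ ≤ 1 / 8 * ((1 / 8) ^ n * (1 / x ^ 2)) := by gcongr
      _ = (1 / 8) ^ (n + 1) * (1 / x ^ 2) := by ring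

theorem wzMate_le (hx : 0 < x) (n : ℕ) : wzMate n x ≤ (x + 2) * wzTerm n x := by
  have hcube : ((n : ℝ) + 1) ^ 3 / (x + 2 * n + 1) ^ 2 ≤ n + 1 := by
    rw [div_le_iff₀ (by positivity), pow_succ']
    gcongr
    linarith
  rw [wzMate, mul_comm]
  refine mul_le_mul_of_nonneg_right ?_ (wzTerm_nonneg n x)
  rw [div_le_iff₀ (by positivity)]
  nlinarith [show 0 ≤ x * n by positivity]

theorem tendsto_wzMate_atTop (n : ℕ) : Tendsto (wzMate n) atTop (𝓝 0) := by
  have hbound : Tendsto (fun x : ℝ => x⁻¹ + 2 * x⁻¹ ^ 2) atTop (𝓝 0) := by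
    simpa using tendsto_inv_atTop_zero.add ((tendsto_inv_atTop_zero.pow 2).const_mul (2 : ℝ))
  refine squeeze_zero' ?_ ?_ hbound <;> filter_upwards [eventually_gt_atTop 0] with x hx
  · exact wzMate_nonneg hx n
  · calc wzMate n x ≤ (x + 2) * wzTerm n x := wzMate_le hx n
      _ ≤ (x + 2) * (1 * (1 / x ^ 2)) := by
        grw [wzTerm_le hx n, pow_le_one₀ (by norm_num) (by norm_num)]
      _ = x⁻¹ + 2 * x⁻¹ ^ 2 := by field_simp

theorem hasSum_wzMate {s : ℝ} (hx : 0 < x) (hs : HasSum (fun j : ℕ => 1 / (x + j) ^ 2) s) :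
    HasSum (fun n => wzMate n x) s := by
  have hpos (j : ℕ) : 0 < x + j := by positivity
  have hsummable (n : ℕ) : Summable fun j : ℕ => wzTerm n (x + j) :=
    .of_nonneg_of_le (fun _ => wzTerm_nonneg n _) (fun j => wzTerm_le (hpos j) n)
      (hs.summable.mul_left _)
  have hrow : Tendsto (fun n => ∑' j : ℕ, wzTerm n (x + j)) atTop (𝓝 0) := by
    have hgeom : Tendsto (fun n => (1 / 8) ^ n * s) atTop (𝓝 0) := by
      simpa only [zero_mul] using
        (tendsto_pow_atTop_nhds_zero_of_lt_one (by norm_num) (by norm_num)).mul_const s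
    exact squeeze_zero (fun n => tsum_nonneg fun _ => wzTerm_nonneg n _)
      (fun n => hasSum_le (fun j => wzTerm_le (hpos j) n) (hsummable n).hasSum (hs.mul_left _))
      hgeom
  have hcolumn (n : ℕ) : Tendsto (fun j : ℕ => wzMate n (x + j)) atTop (𝓝 0) :=
    (tendsto_wzMate_atTop n).comp
      (tendsto_atTop_add_const_left _ x tendsto_natCast_atTop_atTop)
  rw [hasSum_iff_tendsto_nat_of_nonneg (wzMate_nonneg hx)]
  simpa only [wzTerm_zero, hs.tsum_eq, Nat.cast_zero, add_zero] using
    (isWZPair_wzTerm_wzMate hx).tendsto_sum_range (fun n => (hsummable n).hasSum) hcolumn hrow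

end InverseSquares

section OneHalf

theorem hasSum_one_div_odd_sq :
    HasSum (fun j : ℕ => 1 / (2 * j + 1 : ℝ) ^ 2) (Real.pi ^ 2 / 8) := by
  have heven : HasSum (fun j : ℕ => 1 / ((2 * j : ℕ) : ℝ) ^ 2) (1 / 4 * (Real.pi ^ 2 / 6)) := by
    have hscale (j : ℕ) : 1 / ((2 * j : ℕ) : ℝ) ^ 2 = 1 / 4 * (1 / (j : ℝ) ^ 2) := by
      push_cast
      ring
    simpa only [hscale] using hasSum_zeta_two.mul_left (1 / 4)
  have hodd : Summable fun j : ℕ => 1 / ((2 * j + 1 : ℕ) : ℝ) ^ 2 :=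
    hasSum_zeta_two.summable.comp_injective (i := fun j => 2 * j + 1) fun a b h => by simpa using h
  have hsplit := (heven.even_add_odd (f := fun k : ℕ => 1 / (k : ℝ) ^ 2) hodd.hasSum).unique
    hasSum_zeta_two
  convert hodd.hasSum using 1
  · norm_cast
  · linarith

theorem hasSum_one_div_half_add_sq :
    HasSum (fun j : ℕ => 1 / (1 / 2 + j : ℝ) ^ 2) (Real.pi ^ 2 / 2) := by
  have hscale (j : ℕ) : 1 / (1 / 2 + j : ℝ) ^ 2 = 4 * (1 / (2 * j + 1) ^ 2) := by
    rw [show (1 / 2 + j : ℝ) = (2 * j + 1) / 2 by ring]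
    field_simp
    norm_num
  rw [show Real.pi ^ 2 / 2 = 4 * (Real.pi ^ 2 / 8) by ring]
  simpa only [hscale] using hasSum_one_div_odd_sq.mul_left 4

theorem risingFactorial_half_two_mul_add_one (n : ℕ) :
    risingFactorial (1 / 2) (2 * n + 1) * (4 * n + 3) =
      3 / 2 * 4 ^ n * risingFactorial (5 / 4) n * risingFactorial (7 / 4) n := by
  rw [risingFactorial_succ_left, risingFactorial_two_mul,
    show ((1 / 2 + 1) / 2 : ℝ) = 3 / 4 by norm_num,
    show ((1 / 2 + 1 + 1) / 2 : ℝ) = 5 / 4 by norm_num,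
    show (7 / 4 : ℝ) = 3 / 4 + 1 by norm_num, risingFactorial_add_one (by norm_num)]
  ring

theorem wzTerm_half (n : ℕ) :
    wzTerm n (1 / 2) = 4 / 9 * (4 * n + 3) ^ 2 * ((1 / 64) ^ n *
      (risingFactorial (1 / 2) n * risingFactorial 1 n ^ 3) /
        (risingFactorial (5 / 4) n * risingFactorial (7 / 4) n) ^ 2) := by
  have hhalf := (risingFactorial_pos one_half_pos n).ne'
  have h54 := (risingFactorial_pos (a := 5 / 4) (by norm_num) n).ne'
  have h74 := (risingFactorial_pos (a := 7 / 4) (by norm_num) n).ne'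
  rw [wzTerm, eq_div_of_mul_eq (by positivity) (risingFactorial_half_two_mul_add_one n),
    show (64 : ℝ) = 4 ^ 3 by norm_num, one_div_pow, ← pow_mul, mul_comm 3 n, pow_mul]
  field_simp
  ring

theorem wzMate_half (n : ℕ) :
    9 / 2 * wzMate n (1 / 2) = (1 / 64) ^ n *
      (risingFactorial (1 / 2) n * risingFactorial 1 n ^ 3) /
        (risingFactorial (5 / 4) n * risingFactorial (7 / 4) n) ^ 2 *
          (42 * n ^ 2 + 61 * n + 22) := by
  rw [wzMate, wzTerm_half, show (1 / 2 + 2 * n + 1 : ℝ) = (4 * n + 3) / 2 by ring]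
  generalize (1 / 64 : ℝ) ^ n * _ / _ = t
  field_simp
  ring

end OneHalf

theorem stmt_16 :
    9 * Real.pi ^ 2 / 4 =
      ∑' k : ℕ, (1/64 : ℝ) ^ k * (risingFactorial (1/2) k * risingFactorial (1) k * risingFactorial (1) k * risingFactorial (1) k) /
        (risingFactorial (5/4) k * risingFactorial (5/4) k * risingFactorial (7/4) k * risingFactorial (7/4) k) * (42 * (k:ℝ)^2 + 61 * (k:ℝ) + 22) := by
  have hsum := (hasSum_wzMate one_half_pos hasSum_one_div_half_add_sq).mul_left (9 / 2)
  calc 9 * Real.pi ^ 2 / 4 = 9 / 2 * (Real.pi ^ 2 / 2) := by ring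
    _ = ∑' k, 9 / 2 * wzMate k (1 / 2) := hsum.tsum_eq.symm
    _ = _ := tsum_congr fun k => by rw [wzMate_half]; ring
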